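/- Let μ be an ergodic translation-invariant Gibbs measure for the 1-2 model on the hexagonal lattice ℍ (with any weights a, b, c > 0), and let 𝒩_{001}(ω) denote the number of infinite {001}-clusters of ω. Then there exists κ ∈ {0, 1, ∞} such that μ({ω : 𝒩_{001}(ω) = κ}) = 1. -/

import Mathlib

open MeasureTheory

/-- Vertices of the hexagonal lattice: `(x, y, t)` with `t = true` the "upper" vertex. -/
abbrev HexV : Type := ℤ × ℤ × Bool

/-- Edges of the hexagonal lattice: `(x, y, k)` with `k = 0` the a-type (horizontal) edge
joining `(x,y,1)` to `(x,y,0)`, `k = 1` the b-type edge joining `(x,y,1)` to `(x+1,y,0)`,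
`k = 2` the c-type edge joining `(x,y,1)` to `(x,y+1,0)`. -/
abbrev HexE : Type := ℤ × ℤ × Fin 3

/-- A configuration assigns present/absent to each edge. -/
abbrev Config : Type := HexE → Bool

def end1 (e : HexE) : HexV := (e.1, e.2.1, true)

def end2 (e : HexE) : HexV :=
  if e.2.2 = 0 then (e.1, e.2.1, false)
  else if e.2.2 = 1 then (e.1 + 1, e.2.1, false)
  else (e.1, e.2.1 + 1, false)

/-- The edges incident to a vertex, indexed so that index `0` is the a-type (horizontal)
edge, index `1` the b-type edge, index `2` the c-type edge. -/
def edgesAt (v : HexV) : Fin 3 → HexE := fun i =>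
  if v.2.2 then (v.1, v.2.1, i)
  else if i = 0 then (v.1, v.2.1, 0)
  else if i = 1 then (v.1 - 1, v.2.1, 1)
  else (v.1, v.2.1 - 1, 2)

/-- Local configuration of `ω` at `v`: digit `0` (rightmost) is the a-type edge,
digit `1` the b-type edge, digit `2` (leftmost) the c-type edge. -/
def localConf (ω : Config) (v : HexV) : Fin 3 → Bool := fun i => ω (edgesAt v i)

/-- A 1-2 model configuration: every vertex is incident to one or two present edges. -/
def IsConfig (ω : Config) : Prop :=
  ∀ v : HexV,
    1 ≤ (Finset.univ.filter fun i : Fin 3 => localConf ω v i = true).card ∧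
    (Finset.univ.filter fun i : Fin 3 => localConf ω v i = true).card ≤ 2

/-- The local configuration type `{001}` : only the a-type (horizontal) edge is present. -/
def conf001 : Fin 3 → Bool := ![true, false, false]

/-- The six admissible local configuration types `{001},…,{110}`. -/
def validConf (τ : Fin 3 → Bool) : Prop :=
  τ ≠ ![false, false, false] ∧ τ ≠ ![true, true, true]

/-- Vertex weight: `w(001)=w(110)=a`, `w(010)=w(101)=b`, `w(011)=w(100)=c`. -/
def weight (a b c : ℝ) (f : Fin 3 → Bool) : ℝ :=
  match f 2, f 1, f 0 with
  | false, false, true  => a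
  | true,  true,  false => a
  | false, true,  false => b
  | true,  false, true  => b
  | false, true,  true  => c
  | true,  false, false => c
  | false, false, false => 0
  | true,  true,  true  => 0

/-- Adjacency in the hexagonal lattice. -/
def HexAdj (v w : HexV) : Prop :=
  v ≠ w ∧ ∃ e : HexE, (v = end1 e ∨ v = end2 e) ∧ (w = end1 e ∨ w = end2 e)

/-- Adjacency restricted to a vertex set `S`. -/
def adjIn (S : Set HexV) (v w : HexV) : Prop := HexAdj v w ∧ v ∈ S ∧ w ∈ S

/-- The connected component of `v` in the subgraph induced on `S`. -/
def compOf (S : Set HexV) (v : HexV) : Set HexV := {w | Relation.ReflTransGen (adjIn S) v w}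

/-- `C` is a connected component of the subgraph induced on `S`. -/
def IsCompOf (S : Set HexV) (C : Set HexV) : Prop := ∃ v ∈ S, C = compOf S v

/-- Vertices whose local configuration equals `τ`. -/
def confSet (ω : Config) (τ : Fin 3 → Bool) : Set HexV := {v | localConf ω v = τ}

/-- A `τ`-cluster of `ω`. -/
def IsCluster (ω : Config) (τ : Fin 3 → Bool) (C : Set HexV) : Prop :=
  IsCompOf (confSet ω τ) C

/-- The number of infinite `τ`-clusters of `ω`, as an extended natural number. -/
noncomputable def numInfClusters (ω : Config) (τ : Fin 3 → Bool) : ℕ∞ :=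
  {C : Set HexV | IsCluster ω τ C ∧ C.Infinite}.encard

def endsFinset (e : HexE) : Finset HexV := {end1 e, end2 e}

/-- Vertices incident to an edge of `F`. -/
def verts (F : Finset HexE) : Finset HexV := F.biUnion endsFinset

/-- Edges sharing an endpoint with an edge of `F`. -/
def edgeNbhd (F : Finset HexE) : Set HexE :=
  {e' | ∃ e ∈ F,
    end1 e = end1 e' ∨ end1 e = end2 e' ∨ end2 e = end1 e' ∨ end2 e = end2 e'}

/-- Cylinder event: configurations agreeing with `σ` on `S`. -/
def cyl (S : Set HexE) (σ : Config) : Set Config := {ω | ∀ e ∈ S, ω e = σ e}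

/-- A Gibbs measure for the 1-2 model with weights `a`, `b`, `c`. -/
def IsGibbs (a b c : ℝ) (μ : Measure Config) : Prop :=
  IsProbabilityMeasure μ ∧ μ {ω | IsConfig ω} = 1 ∧
  ∀ F : Finset HexE, ∀ σ τ : Config, IsConfig σ → IsConfig τ →
    (∀ e ∉ F, σ e = τ e) →
    μ (cyl (↑F ∪ edgeNbhd F) σ) *
        ENNReal.ofReal (∏ v ∈ verts F, weight a b c (localConf τ v)) =
      μ (cyl (↑F ∪ edgeNbhd F) τ) *
        ENNReal.ofReal (∏ v ∈ verts F, weight a b c (localConf σ v))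

/-- Translation of edges by `g ∈ ℤ²`. -/
def shiftE (g : ℤ × ℤ) (e : HexE) : HexE := (e.1 + g.1, e.2.1 + g.2, e.2.2)

/-- Induced translation action on configurations. -/
def shiftConfig (g : ℤ × ℤ) (ω : Config) : Config := fun e => ω (shiftE g e)

/-- Translation invariance of a measure on configurations. -/
def TransInvariant (μ : Measure Config) : Prop :=
  ∀ g : ℤ × ℤ, μ.map (shiftConfig g) = μ

/-- Ergodicity: every translation-invariant measurable event has measure `0` or `1`. -/
def IsErgodicTI (μ : Measure Config) : Prop :=
  ∀ A : Set Config, MeasurableSet A → (∀ g, shiftConfig g ⁻¹' A = A) → μ A = 0 ∨ μ A = 1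

/-- The box `B_n(i,j)`. -/
def box (n : ℕ) (i j : ℤ) : Set HexV :=
  {v | |v.1 - i| ≤ (n : ℤ) ∧ |v.2.1 - j| ≤ (n : ℤ)}

/-- Vertices outside `B` adjacent to a vertex of `B`. -/
def outerBoundary (B : Set HexV) : Set HexV := {v | v ∉ B ∧ ∃ w ∈ B, HexAdj v w}

/-- `B_N(i,j)` is an encounter box for `ω` with respect to the infinite `{001}`-cluster `C`. -/
def IsEncounterBoxWrt (ω : Config) (N : ℕ) (i j : ℤ) (C : Set HexV) : Prop :=
  IsCluster ω conf001 C ∧ C.Infinite ∧ box N i j ⊆ C ∧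
  (∀ D, IsCompOf (C \ box (N + 2) i j) D → D.Infinite) ∧
  {D : Set HexV | IsCompOf (C \ box (N + 2) i j) D ∧ D.Infinite}.encard = 3

/-- `B_N(i,j)` is an encounter box for `ω`. -/
def IsEncounterBox (ω : Config) (N : ℕ) (i j : ℤ) : Prop :=
  ∃ C : Set HexV, IsEncounterBoxWrt ω N i j C

/-- A 3-partition of `Y`: an unordered triple of pairwise disjoint nonempty sets with union `Y`. -/
def IsThreePartition {α : Type*} (Y : Set α) (P : Set (Set α)) : Prop :=
  ∃ P₁ P₂ P₃ : Set α, P = {P₁, P₂, P₃} ∧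
    P₁.Nonempty ∧ P₂.Nonempty ∧ P₃.Nonempty ∧
    Disjoint P₁ P₂ ∧ Disjoint P₁ P₃ ∧ Disjoint P₂ P₃ ∧
    P₁ ∪ P₂ ∪ P₃ = Y

/-- Two 3-partitions are compatible if their parts can be ordered so that `Q₂ ∪ Q₃ ⊆ P₁`. -/
def CompatiblePartitions {α : Type*} (P Q : Set (Set α)) : Prop :=
  ∃ P₁ ∈ P, ∃ Q₁ ∈ Q, ∀ R ∈ Q, R ≠ Q₁ → R ⊆ P₁

/-!
The number of infinite `{001}`-clusters is measurable and translation-invariant, so by ergodicity it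
is almost surely a constant `κ`. Suppose `0 < κ < ∞`. By Poincaré recurrence along the diagonal
there are, arbitrarily far in both diagonal directions, edges between neighbouring cells with both
endpoints in `{001}`-vertices. Two of them serve as opposite corners of a rectangle meeting every
infinite cluster. Making all edges of the rectangle horizontal again yields a valid configuration:
a vertex with two edges in the rectangle now has its horizontal edge present and another one absent,
and the only vertices with just one edge there are at the two corners, where that edge is horizontal
and was already present. Existing `{001}`-vertices survive, and those in the rectangle now lie in
one component, so at most one infinite cluster is left. The Gibbs property makes such a local change
absolutely continuous with respect to `μ`, hence `κ ≤ 1`.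
-/

section Components

variable {S T : Set HexV} {u v w : HexV}

theorem HexAdj.symm (h : HexAdj v w) : HexAdj w v :=
  let ⟨hne, e, hv, hw⟩ := h
  ⟨hne.symm, e, hw, hv⟩

theorem HexAdj.exists_edge (h : HexAdj v w) :
    ∃ e, (v = end1 e ∧ w = end2 e) ∨ (v = end2 e ∧ w = end1 e) := by
  obtain ⟨hne, e, rfl | rfl, rfl | rfl⟩ := h
  · exact absurd rfl hne
  · exact ⟨e, .inl ⟨rfl, rfl⟩⟩
  · exact ⟨e, .inr ⟨rfl, rfl⟩⟩
  · exact absurd rfl hne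

theorem hexAdj_end1_end2 (e : HexE) : HexAdj (end1 e) (end2 e) := by
  refine ⟨fun h => ?_, e, .inl rfl, .inr rfl⟩
  have hlevel : (end1 e).2.2 = (end2 e).2.2 := congrArg (fun v : HexV => v.2.2) h
  unfold end1 end2 at hlevel
  split_ifs at hlevel

theorem mem_compOf_self (S : Set HexV) (v : HexV) : v ∈ compOf S v :=
  Relation.ReflTransGen.refl

theorem compOf_subset (hv : v ∈ S) : compOf S v ⊆ S := by
  intro w hw
  induction hw with
  | refl => exact hv
  | tail _ hstep _ => exact hstep.2.2

theorem mem_compOf_symm (h : w ∈ compOf S v) : v ∈ compOf S w :=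
  Relation.ReflTransGen.mono (r := Function.swap (adjIn S)) (p := adjIn S)
    (fun _ _ hstep => ⟨hstep.1.symm, hstep.2.2, hstep.2.1⟩) _ _ (Relation.reflTransGen_swap.2 h)

theorem compOf_eq_of_mem (h : w ∈ compOf S v) : compOf S w = compOf S v :=
  Set.Subset.antisymm (fun _ hu => Relation.ReflTransGen.trans h hu)
    (fun _ hu => Relation.ReflTransGen.trans (mem_compOf_symm h) hu)

theorem HexAdj.compOf_eq (h : HexAdj v w) (hv : v ∈ S) (hw : w ∈ S) :
    compOf S v = compOf S w :=
  (compOf_eq_of_mem (Relation.ReflTransGen.single ⟨h, hv, hw⟩)).symm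

theorem compOf_mono (hST : S ⊆ T) : compOf S v ⊆ compOf T v :=
  fun _ hw => Relation.ReflTransGen.mono (r := adjIn S) (p := adjIn T)
    (fun _ _ hstep => ⟨hstep.1, hST hstep.2.1, hST hstep.2.2⟩) _ _ hw

theorem compOf_eq_of_compOf_subset (hST : S ⊆ T) (hv : compOf T v ⊆ S) :
    compOf S v = compOf T v := by
  refine (compOf_mono hST).antisymm fun w hw => ?_
  induction hw with
  | refl => exact mem_compOf_self S v
  | tail hpath hstep ih => exact ih.tail ⟨hstep.1, hv hpath, hv (hpath.tail hstep)⟩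

theorem map_eq_of_mem_compOf {α : Type*} {f : HexV → α}
    (hf : ∀ u w, adjIn S u w → f u = f w) (hw : w ∈ compOf S v) : f w = f v := by
  induction hw with
  | refl => rfl
  | tail _ hstep ih => exact (hf _ _ hstep).symm.trans ih

theorem IsCompOf.eq_of_infinite_of_local_enlargement {R H : Set HexV} (hST : S ⊆ T)
    (hout : T \ R ⊆ S) (hcomp : ∀ v ∈ T ∩ R, compOf T v = H)
    (hmeet : ∀ C, IsCompOf S C → C.Infinite → (C ∩ R).Nonempty)
    {D : Set HexV} (hD : IsCompOf T D) (hinf : D.Infinite) : D = H := by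
  obtain ⟨v, hv, rfl⟩ := hD
  by_cases hR : (compOf T v ∩ R).Nonempty
  · obtain ⟨w, hw, hwR⟩ := hR
    rw [← compOf_eq_of_mem hw, hcomp w ⟨compOf_subset hv hw, hwR⟩]
  · have hsub : compOf T v ⊆ S := fun w hw =>
      hout ⟨compOf_subset hv hw, fun hwR => hR ⟨w, hw, hwR⟩⟩
    have heq : compOf S v = compOf T v := compOf_eq_of_compOf_subset hST hsub
    have hcluster : IsCompOf S (compOf T v) := ⟨v, hsub (mem_compOf_self T v), heq.symm⟩
    exact absurd (hmeet _ hcluster hinf) hR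

end Components

section Measurability

variable {Ω α : Type*} [MeasurableSpace Ω]

theorem measurableSet_isChain {r : Ω → α → α → Prop}
    (hr : ∀ u v, MeasurableSet {ω | r ω u v}) (l : List α) :
    MeasurableSet {ω | List.IsChain (r ω) l} := by
  induction l with
  | nil => simp
  | cons u l ih =>
    cases l with
    | nil => simp
    | cons v l =>
      simp only [List.isChain_cons_cons]
      exact (hr u v).inter ih

theorem measurableSet_reflTransGen [Countable α] {r : Ω → α → α → Prop}
    (hr : ∀ u v, MeasurableSet {ω | r ω u v}) (u v : α) :
    MeasurableSet {ω | Relation.ReflTransGen (r ω) u v} := by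
  have hchain : ∀ ω, Relation.ReflTransGen (r ω) u v ↔
      ∃ l : List α, List.IsChain (r ω) (u :: l) ∧ (u :: l).getLast (List.cons_ne_nil _ _) = v :=
    fun ω => ⟨List.exists_isChain_cons_of_relationReflTransGen,
      fun ⟨l, hl, hlast⟩ => List.relationReflTransGen_of_exists_isChain_cons l hl hlast⟩
  simp only [hchain, Set.ofPred_exists]
  exact MeasurableSet.iUnion fun l => (measurableSet_isChain hr _).inter (MeasurableSet.const _)

theorem measurableSet_infinite [Countable α] {A : Ω → Set α}
    (hA : ∀ v, MeasurableSet {ω | v ∈ A ω}) : MeasurableSet {ω | (A ω).Infinite} := by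
  simp only [← Set.encard_eq_top_iff]
  exact (measurable_encard.comp (measurable_set_iff.2 fun v => measurableSet_setOfPred.1 (hA v)))
    (measurableSet_singleton ⊤)

end Measurability

section ClusterCount

theorem measurable_localConf (v : HexV) : Measurable fun ω : Config => localConf ω v :=
  measurable_pi_lambda _ fun _ => measurable_pi_apply _

theorem measurableSet_isConfig : MeasurableSet {ω : Config | IsConfig ω} := by
  simp only [IsConfig, Set.ofPred_forall]
  refine MeasurableSet.iInter fun v => measurable_localConf v (t := {f |
    1 ≤ (Finset.univ.filter fun i => f i = true).card ∧
      (Finset.univ.filter fun i => f i = true).card ≤ 2}) .of_discrete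

theorem measurableSet_mem_confSet (τ : Fin 3 → Bool) (v : HexV) :
    MeasurableSet {ω : Config | v ∈ confSet ω τ} :=
  measurable_localConf v (measurableSet_singleton τ)

theorem measurableSet_mem_compOf_confSet (τ : Fin 3 → Bool) (v w : HexV) :
    MeasurableSet {ω : Config | w ∈ compOf (confSet ω τ) v} :=
  measurableSet_reflTransGen (fun u w => (MeasurableSet.const _).inter
    ((measurableSet_mem_confSet τ u).inter (measurableSet_mem_confSet τ w))) v w

/-- Canonical representatives of the infinite components of `S`: the vertices with least code in
their component. They turn a count of sets of vertices into a count of vertices. -/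
def infCompReps (S : Set HexV) : Set HexV :=
  {v | v ∈ S ∧ (compOf S v).Infinite ∧
    ∀ w ∈ compOf S v, Encodable.encode v ≤ Encodable.encode w}

theorem encard_infinite_compOf_eq (S : Set HexV) :
    {C | IsCompOf S C ∧ C.Infinite}.encard = (infCompReps S).encard := by
  have himage : compOf S '' infCompReps S = {C | IsCompOf S C ∧ C.Infinite} := by
    refine Set.Subset.antisymm ?_ ?_
    · rintro _ ⟨v, ⟨hv, hinf, -⟩, rfl⟩
      exact ⟨⟨v, hv, rfl⟩, hinf⟩
    · rintro _ ⟨⟨v, hv, rfl⟩, hinf⟩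
      obtain ⟨w, hw, hmin⟩ := exists_minimalFor_of_wellFoundedLT (· ∈ compOf S v)
        Encodable.encode ⟨v, mem_compOf_self S v⟩
      have heq := compOf_eq_of_mem hw
      refine ⟨w, ⟨compOf_subset hv hw, heq ▸ hinf, fun u hu => ?_⟩, heq⟩
      exact (le_total _ _).elim id (hmin (heq ▸ hu))
  have hinj : Set.InjOn (compOf S) (infCompReps S) := by
    rintro v ⟨-, -, hv⟩ w ⟨-, -, hw⟩ heq
    exact Encodable.encode_injective <| le_antisymm
      (hv w (heq ▸ mem_compOf_self S w)) (hw v (heq ▸ mem_compOf_self S v))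
  rw [← himage, hinj.encard_image]

theorem measurable_numInfClusters (τ : Fin 3 → Bool) :
    Measurable fun ω : Config => numInfClusters ω τ := by
  have hreps (ω : Config) : numInfClusters ω τ = (infCompReps (confSet ω τ)).encard :=
    encard_infinite_compOf_eq _
  simp only [hreps]
  refine measurable_encard.comp (measurable_set_iff.2 fun v => measurableSet_setOfPred.1 ?_)
  have hmin : MeasurableSet {ω : Config | ∀ w ∈ compOf (confSet ω τ) v,
      Encodable.encode v ≤ Encodable.encode w} := by
    simp only [Set.ofPred_forall]
    exact .iInter fun w => .imp (measurableSet_mem_compOf_confSet τ v w) (.const _)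
  exact (measurableSet_mem_confSet τ v).inter
    ((measurableSet_infinite (measurableSet_mem_compOf_confSet τ v)).inter hmin)

end ClusterCount

section Translation

/-- Translation of vertices by `g ∈ ℤ²`, the vertex counterpart of `shiftE`. -/
def shiftV (g : ℤ × ℤ) (v : HexV) : HexV := (v.1 + g.1, v.2.1 + g.2, v.2.2)

theorem shiftV_neg_shiftV (g : ℤ × ℤ) (v : HexV) : shiftV (-g) (shiftV g v) = v := by
  simp [shiftV]

theorem shiftV_shiftV_neg (g : ℤ × ℤ) (v : HexV) : shiftV g (shiftV (-g) v) = v := by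
  simp [shiftV]

theorem shiftV_bijective (g : ℤ × ℤ) : Function.Bijective (shiftV g) :=
  Function.bijective_iff_has_inverse.2 ⟨shiftV (-g), shiftV_neg_shiftV g, shiftV_shiftV_neg g⟩

theorem shiftE_edgesAt (g : ℤ × ℤ) (v : HexV) (i : Fin 3) :
    shiftE g (edgesAt v i) = edgesAt (shiftV g v) i := by
  unfold edgesAt shiftE shiftV
  split_ifs <;> ext <;> simp <;> ring

theorem shiftV_end2 (g : ℤ × ℤ) (e : HexE) : shiftV g (end2 e) = end2 (shiftE g e) := by
  unfold end2 shiftE shiftV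
  split_ifs <;> ext <;> simp <;> ring

theorem hexAdj_shiftV_iff (g : ℤ × ℤ) {v w : HexV} :
    HexAdj (shiftV g v) (shiftV g w) ↔ HexAdj v w := by
  have hshift (g : ℤ × ℤ) {v w : HexV} (h : HexAdj v w) : HexAdj (shiftV g v) (shiftV g w) := by
    obtain ⟨e, ⟨rfl, rfl⟩ | ⟨rfl, rfl⟩⟩ := h.exists_edge
    · exact shiftV_end2 g e ▸ hexAdj_end1_end2 (shiftE g e)
    · exact shiftV_end2 g e ▸ (hexAdj_end1_end2 (shiftE g e)).symm
  refine ⟨fun h => ?_, hshift g⟩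
  simpa only [shiftV_neg_shiftV] using hshift (-g) h

theorem compOf_preimage_shiftV (g : ℤ × ℤ) (S : Set HexV) (v : HexV) :
    compOf (shiftV g ⁻¹' S) v = shiftV g ⁻¹' compOf S (shiftV g v) := by
  refine Set.Subset.antisymm (fun w hw => Relation.ReflTransGen.lift (shiftV g)
    (fun _ _ hstep => ⟨(hexAdj_shiftV_iff g).2 hstep.1, hstep.2⟩) _ _ hw) fun w hw => ?_
  have hback : Relation.ReflTransGen (adjIn (shiftV g ⁻¹' S))
      (shiftV (-g) (shiftV g v)) (shiftV (-g) (shiftV g w)) := by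
    refine Relation.ReflTransGen.lift (shiftV (-g)) (fun u u' hstep => ?_) _ _ hw
    simpa only [adjIn, Set.mem_preimage, shiftV_shiftV_neg, hexAdj_shiftV_iff] using hstep
  rwa [shiftV_neg_shiftV, shiftV_neg_shiftV] at hback

theorem confSet_shiftConfig (g : ℤ × ℤ) (ω : Config) (τ : Fin 3 → Bool) :
    confSet (shiftConfig g ω) τ = shiftV g ⁻¹' confSet ω τ := by
  ext v
  have hlocal : localConf (shiftConfig g ω) v = localConf ω (shiftV g v) :=
    funext fun i => congrArg ω (shiftE_edgesAt g v i)
  simp only [confSet, Set.mem_preimage, Set.mem_ofPred_eq, hlocal]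

theorem numInfClusters_shiftConfig (g : ℤ × ℤ) (ω : Config) (τ : Fin 3 → Bool) :
    numInfClusters (shiftConfig g ω) τ = numInfClusters ω τ := by
  have himage : {C | IsCluster (shiftConfig g ω) τ C ∧ C.Infinite} =
      Set.preimage (shiftV g) '' {C | IsCluster ω τ C ∧ C.Infinite} := by
    ext C
    simp only [IsCluster, IsCompOf, confSet_shiftConfig, compOf_preimage_shiftV, Set.mem_image,
      Set.mem_ofPred_eq, Set.mem_preimage]
    constructor
    · rintro ⟨⟨v, hv, rfl⟩, hinf⟩
      exact ⟨_, ⟨⟨shiftV g v, hv, rfl⟩, fun hfin =>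
        hinf (hfin.preimage (shiftV_bijective g).injective.injOn)⟩, rfl⟩
    · rintro ⟨_, ⟨⟨v, hv, rfl⟩, hinf⟩, rfl⟩
      refine ⟨⟨shiftV (-g) v, ?_, ?_⟩, hinf.preimage ?_⟩
      · rwa [shiftV_shiftV_neg]
      · rw [shiftV_shiftV_neg]
      · rw [(shiftV_bijective g).surjective.range_eq]; exact Set.subset_univ _
  rw [numInfClusters, himage,
    (shiftV_bijective g).surjective.preimage_injective.encard_image, numInfClusters]

theorem measurable_shiftConfig (g : ℤ × ℤ) : Measurable (shiftConfig g) :=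
  measurable_pi_lambda _ fun e => measurable_pi_apply (shiftE g e)

theorem IsErgodicTI.exists_ae_eq_const {α : Type*} [MeasurableSpace α] [Nonempty α]
    [MeasurableSpace.CountablySeparated α] {μ : Measure Config} [IsProbabilityMeasure μ]
    (hμ : IsErgodicTI μ) {f : Config → α} (hf : Measurable f)
    (hinv : ∀ g ω, f (shiftConfig g ω) = f ω) : ∃ κ, ∀ᵐ ω ∂μ, f ω = κ := by
  refine Filter.exists_eventuallyEq_const_of_forall_separating MeasurableSet fun A hA => ?_
  refine (hμ (f ⁻¹' A) (hf hA) fun g => ?_).symm.imp (fun h => ?_) fun h => ?_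
  · ext ω
    simp only [Set.mem_preimage, hinv]
  · exact (mem_ae_iff_prob_eq_one (hf hA)).2 h
  · exact measure_eq_zero_iff_ae_notMem.1 h

end Translation

section Recurrence

theorem iterate_shiftConfig (g : ℤ × ℤ) (n : ℕ) : (shiftConfig g)^[n] = shiftConfig (n • g) := by
  induction n with
  | zero => funext ω e; simp [shiftConfig, shiftE]
  | succ n ih =>
    rw [Function.iterate_succ', ih]
    funext ω e
    simp only [Function.comp_apply, shiftConfig, shiftE, succ_nsmul', Prod.fst_add, Prod.snd_add,
      add_assoc]

theorem TransInvariant.ae_mem_imp_frequently_shiftConfig_mem {μ : Measure Config}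
    [IsFiniteMeasure μ] (hμ : TransInvariant μ) (g : ℤ × ℤ) {A : Set Config}
    (hA : MeasurableSet A) :
    ∀ᵐ ω ∂μ, ω ∈ A → ∃ᶠ n : ℕ in Filter.atTop, shiftConfig (n • g) ω ∈ A := by
  have hpres : MeasurePreserving (shiftConfig g) μ μ := ⟨measurable_shiftConfig g, hμ g⟩
  simpa only [iterate_shiftConfig] using
    hpres.conservative.ae_mem_imp_frequently_image_mem hA.nullMeasurableSet

/-- `S` contains the upper vertex of the cell `(x, y)` together with a neighbour in another cell,
so that a rectangle with lower left cell `(x, y)` does not isolate that vertex within `S`. -/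
def IsLowerCorner (S : Set HexV) (x y : ℤ) : Prop :=
  (x, y, true) ∈ S ∧ ((x + 1, y, false) ∈ S ∨ (x, y + 1, false) ∈ S)

/-- The counterpart of `IsLowerCorner` for the upper right cell of a rectangle. -/
def IsUpperCorner (S : Set HexV) (x y : ℤ) : Prop :=
  (x, y, false) ∈ S ∧ ((x - 1, y, true) ∈ S ∨ (x, y - 1, true) ∈ S)

theorem IsLowerCorner.mono {S T : Set HexV} {x y : ℤ} (h : IsLowerCorner S x y) (hST : S ⊆ T) :
    IsLowerCorner T x y :=
  ⟨hST h.1, h.2.imp (@hST _) (@hST _)⟩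

theorem IsUpperCorner.mono {S T : Set HexV} {x y : ℤ} (h : IsUpperCorner S x y) (hST : S ⊆ T) :
    IsUpperCorner T x y :=
  ⟨hST h.1, h.2.imp (@hST _) (@hST _)⟩

theorem IsLowerCorner.exists_isUpperCorner {S : Set HexV} {x y : ℤ} (h : IsLowerCorner S x y) :
    ∃ x' ≥ x, ∃ y' ≥ y, IsUpperCorner S x' y' := by
  obtain ⟨hO, hZ | hZ⟩ := h
  · exact ⟨x + 1, by lia, y, le_rfl, hZ, .inl (by rwa [add_sub_cancel_right])⟩
  · exact ⟨x, le_rfl, y + 1, by lia, hZ, .inr (by rwa [add_sub_cancel_right])⟩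

theorem IsCompOf.exists_isLowerCorner {S C : Set HexV} (hC : IsCompOf S C) (hinf : C.Infinite) :
    ∃ x y, IsLowerCorner S x y := by
  obtain ⟨v, -, rfl⟩ := hC
  by_contra! hnone
  have hedge (e : HexE) (h1 : end1 e ∈ S) (h2 : end2 e ∈ S) :
      ((end1 e).1, (end1 e).2.1) = ((end2 e).1, (end2 e).2.1) := by
    unfold end2 at h2 ⊢
    split_ifs at h2 ⊢ with h
    · rfl
    · exact absurd ⟨h1, .inl h2⟩ (hnone e.1 e.2.1)
    · exact absurd ⟨h1, .inr h2⟩ (hnone e.1 e.2.1)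
  have hcell (w) (hw : w ∈ compOf S v) : (w.1, w.2.1) = (v.1, v.2.1) := by
    refine map_eq_of_mem_compOf (f := fun v : HexV => (v.1, v.2.1)) (fun u w hstep => ?_) hw
    obtain ⟨e, ⟨rfl, rfl⟩ | ⟨rfl, rfl⟩⟩ := hstep.1.exists_edge
    · exact hedge e hstep.2.1 hstep.2.2
    · exact (hedge e hstep.2.2 hstep.2.1).symm
  refine hinf (({(v.1, v.2.1, true), (v.1, v.2.1, false)} : Set HexV).toFinite.subset ?_)
  rintro ⟨x, y, t⟩ hw
  obtain ⟨rfl, rfl⟩ := Prod.mk.inj (hcell _ hw)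
  cases t <;> simp

theorem isLowerCorner_confSet_shiftConfig_iff (g : ℤ × ℤ) (ω : Config) (τ : Fin 3 → Bool)
    (x y : ℤ) : IsLowerCorner (confSet (shiftConfig g ω) τ) x y ↔
      IsLowerCorner (confSet ω τ) (x + g.1) (y + g.2) := by
  simp only [IsLowerCorner, confSet_shiftConfig, Set.mem_preimage, shiftV, add_right_comm]

theorem measurableSet_isLowerCorner (τ : Fin 3 → Bool) (x y : ℤ) :
    MeasurableSet {ω : Config | IsLowerCorner (confSet ω τ) x y} :=
  (measurableSet_mem_confSet τ _).inter
    ((measurableSet_mem_confSet τ _).union (measurableSet_mem_confSet τ _))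

theorem TransInvariant.ae_isLowerCorner_imp_frequently {μ : Measure Config} [IsFiniteMeasure μ]
    (hμ : TransInvariant μ) (τ : Fin 3 → Bool) (g : ℤ × ℤ) :
    ∀ᵐ ω ∂μ, ∀ x y, IsLowerCorner (confSet ω τ) x y →
      ∃ᶠ n : ℕ in Filter.atTop, IsLowerCorner (confSet ω τ) (x + n * g.1) (y + n * g.2) := by
  simp only [ae_all_iff]
  intro x y
  filter_upwards [hμ.ae_mem_imp_frequently_shiftConfig_mem g (measurableSet_isLowerCorner τ x y)]
    with ω hω
  simpa only [Set.mem_ofPred_eq, isLowerCorner_confSet_shiftConfig_iff, Prod.smul_fst,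
    Prod.smul_snd, Int.nsmul_eq_mul] using hω

theorem TransInvariant.ae_forall_exists_corners {μ : Measure Config} [IsFiniteMeasure μ]
    (hμ : TransInvariant μ) (τ : Fin 3 → Bool) :
    ∀ᵐ ω ∂μ, numInfClusters ω τ ≠ 0 → ∀ N : ℤ,
      (∃ x ≤ N, ∃ y ≤ N, IsLowerCorner (confSet ω τ) x y) ∧
      (∃ x ≥ N, ∃ y ≥ N, IsUpperCorner (confSet ω τ) x y) := by
  filter_upwards [hμ.ae_isLowerCorner_imp_frequently τ (-1, -1),
    hμ.ae_isLowerCorner_imp_frequently τ (1, 1)] with ω hneg hpos hnum N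
  obtain ⟨C, hC, hinf⟩ := Set.encard_ne_zero.1 hnum
  obtain ⟨x, y, hxy⟩ := hC.exists_isLowerCorner hinf
  obtain ⟨m, hm, hlower⟩ := Filter.frequently_atTop.1 (hneg x y hxy)
    ((x - N).toNat + (y - N).toNat)
  obtain ⟨n, hn, hlower'⟩ := Filter.frequently_atTop.1 (hpos x y hxy)
    ((N - x).toNat + (N - y).toNat)
  obtain ⟨x', hx', y', hy', hupper⟩ := hlower'.exists_isUpperCorner
  exact ⟨⟨_, by lia, _, by lia, hlower⟩, ⟨x', by lia, y', by lia, hupper⟩⟩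

end Recurrence

section Rectangle

theorem hexAdj_a_edge (x y : ℤ) : HexAdj (x, y, true) (x, y, false) :=
  hexAdj_end1_end2 (x, y, 0)

theorem hexAdj_b_edge (x y : ℤ) : HexAdj (x, y, true) (x + 1, y, false) :=
  hexAdj_end1_end2 (x, y, 1)

theorem hexAdj_c_edge (x y : ℤ) : HexAdj (x, y, true) (x, y + 1, false) :=
  hexAdj_end1_end2 (x, y, 2)

theorem hexAdj_b_edge_sub_one (x y : ℤ) : HexAdj (x, y, false) (x - 1, y, true) := by
  simpa only [sub_add_cancel] using (hexAdj_b_edge (x - 1) y).symm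

theorem hexAdj_c_edge_sub_one (x y : ℤ) : HexAdj (x, y, false) (x, y - 1, true) := by
  simpa only [sub_add_cancel] using (hexAdj_c_edge x (y - 1)).symm

/-- `S` contains every vertex all of whose neighbours lie in cells of the rectangle
`[x₁, x₂] × [y₁, y₂]`. Membership of the remaining boundary vertices is left open. -/
structure IsFilledRect (S : Set HexV) (x₁ x₂ y₁ y₂ : ℤ) : Prop where
  width : x₁ + 2 ≤ x₂
  height : y₁ + 2 ≤ y₂
  lower_mem : ∀ {x y}, x₁ < x → x ≤ x₂ → y₁ < y → y ≤ y₂ → (x, y, false) ∈ S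
  upper_mem : ∀ {x y}, x₁ ≤ x → x < x₂ → y₁ ≤ y → y < y₂ → (x, y, true) ∈ S

namespace IsFilledRect

variable {S : Set HexV} {x₁ x₂ y₁ y₂ : ℤ} (hS : IsFilledRect S x₁ x₂ y₁ y₂) {x y : ℤ}

include hS

theorem compOf_lower_row (hx : x₁ < x) (hx' : x ≤ x₂) (hy : y₁ < y) (hy' : y < y₂) :
    compOf S (x, y, false) = compOf S (x₁ + 1, y, false) := by
  induction x, hx using Int.leInduction with
  | base => rfl
  | succ x hx ih =>
    have hO : (x, y, true) ∈ S := hS.upper_mem (by lia) (by lia) hy.le hy'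
    calc compOf S (x + 1, y, false)
      _ = compOf S (x, y, true) :=
        ((hexAdj_b_edge x y).compOf_eq hO (hS.lower_mem (by lia) hx' hy hy'.le)).symm
      _ = compOf S (x, y, false) :=
        (hexAdj_a_edge x y).compOf_eq hO (hS.lower_mem (by lia) (by lia) hy hy'.le)
      _ = compOf S (x₁ + 1, y, false) := ih (by lia)

theorem compOf_lower_column (hx : x₁ < x) (hx' : x < x₂) (hy : y₁ < y) (hy' : y ≤ y₂) :
    compOf S (x, y, false) = compOf S (x, y₁ + 1, false) := by
  induction y, hy using Int.leInduction with
  | base => rfl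
  | succ y hy ih =>
    have hO : (x, y, true) ∈ S := hS.upper_mem hx.le hx' (by lia) (by lia)
    calc compOf S (x, y + 1, false)
      _ = compOf S (x, y, true) :=
        ((hexAdj_c_edge x y).compOf_eq hO (hS.lower_mem hx hx'.le (by lia) hy')).symm
      _ = compOf S (x, y, false) :=
        (hexAdj_a_edge x y).compOf_eq hO (hS.lower_mem hx hx'.le (by lia) (by lia))
      _ = compOf S (x, y₁ + 1, false) := ih (by lia)

theorem compOf_lower_interior (hx : x₁ < x) (hx' : x ≤ x₂) (hy : y₁ < y) (hy' : y ≤ y₂)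
    (hne : x ≠ x₂ ∨ y ≠ y₂) :
    compOf S (x, y, false) = compOf S (x₁ + 1, y₁ + 1, false) := by
  have hwidth := hS.width
  have hheight := hS.height
  rcases hy'.lt_or_eq with hlt | rfl
  · rw [hS.compOf_lower_row hx hx' hy hlt,
      hS.compOf_lower_column (by lia) (by lia) hy hy']
  · rw [hS.compOf_lower_column hx (by lia) hy hy',
      hS.compOf_lower_row hx hx' (by lia) (by lia)]

theorem compOf_upper_interior (hx : x₁ ≤ x) (hx' : x < x₂) (hy : y₁ ≤ y) (hy' : y < y₂)
    (hne : x ≠ x₁ ∨ y ≠ y₁) :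
    compOf S (x, y, true) = compOf S (x₁ + 1, y₁ + 1, false) := by
  have hO := hS.upper_mem hx hx' hy hy'
  rcases hx.lt_or_eq with hx_lt | rfl
  · rcases hy.lt_or_eq with hy_lt | rfl
    · rw [(hexAdj_a_edge x y).compOf_eq hO (hS.lower_mem hx_lt hx'.le hy_lt hy'.le)]
      exact hS.compOf_lower_interior hx_lt hx'.le hy_lt hy'.le (by lia)
    · rw [(hexAdj_c_edge x y₁).compOf_eq hO (hS.lower_mem hx_lt hx'.le (by lia) hy')]
      exact hS.compOf_lower_interior hx_lt hx'.le (by lia) hy' (by lia)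
  · rw [(hexAdj_b_edge x₁ y).compOf_eq hO (hS.lower_mem (by lia) hx' (by lia) hy'.le)]
    exact hS.compOf_lower_interior (by lia) hx' (by lia) hy'.le (by lia)

theorem compOf_upper_full (hcorner : IsLowerCorner S x₁ y₁) (hx : x₁ ≤ x) (hx' : x < x₂)
    (hy : y₁ ≤ y) (hy' : y < y₂) :
    compOf S (x, y, true) = compOf S (x₁ + 1, y₁ + 1, false) := by
  have hwidth := hS.width
  have hheight := hS.height
  by_cases hne : x ≠ x₁ ∨ y ≠ y₁
  · exact hS.compOf_upper_interior hx hx' hy hy' hne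
  obtain ⟨rfl, rfl⟩ : x = x₁ ∧ y = y₁ := by lia
  obtain ⟨hO, hZ | hZ⟩ := hcorner
  · rw [(hexAdj_b_edge x y).compOf_eq hO hZ, (hexAdj_a_edge (x + 1) y).symm.compOf_eq hZ
      (hS.upper_mem (by lia) (by lia) hy hy')]
    exact hS.compOf_upper_interior (by lia) (by lia) hy hy' (by lia)
  · rw [(hexAdj_c_edge x y).compOf_eq hO hZ, (hexAdj_a_edge x (y + 1)).symm.compOf_eq hZ
      (hS.upper_mem hx hx' (by lia) (by lia))]
    exact hS.compOf_upper_interior hx hx' (by lia) (by lia) (by lia)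

theorem compOf_lower_full (hcorner : IsUpperCorner S x₂ y₂) (hx : x₁ < x) (hx' : x ≤ x₂)
    (hy : y₁ < y) (hy' : y ≤ y₂) :
    compOf S (x, y, false) = compOf S (x₁ + 1, y₁ + 1, false) := by
  have hwidth := hS.width
  have hheight := hS.height
  by_cases hne : x ≠ x₂ ∨ y ≠ y₂
  · exact hS.compOf_lower_interior hx hx' hy hy' hne
  obtain ⟨rfl, rfl⟩ : x = x₂ ∧ y = y₂ := by lia
  obtain ⟨hZ, hO | hO⟩ := hcorner
  · rw [(hexAdj_b_edge_sub_one x y).compOf_eq hZ hO, (hexAdj_a_edge (x - 1) y).compOf_eq hO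
      (hS.lower_mem (by lia) (by lia) hy hy')]
    exact hS.compOf_lower_interior (by lia) (by lia) hy hy' (by lia)
  · rw [(hexAdj_c_edge_sub_one x y).compOf_eq hZ hO, (hexAdj_a_edge x (y - 1)).compOf_eq hO
      (hS.lower_mem hx hx' (by lia) (by lia))]
    exact hS.compOf_lower_interior hx hx' (by lia) (by lia) (by lia)

theorem compOf_lower (hcorner : IsLowerCorner S x₁ y₁) (hcorner' : IsUpperCorner S x₂ y₂)
    (hx : x₁ ≤ x) (hx' : x ≤ x₂) (hy : y₁ ≤ y) (hy' : y ≤ y₂) (hZ : (x, y, false) ∈ S) :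
    compOf S (x, y, false) = compOf S (x₁ + 1, y₁ + 1, false) := by
  have hwidth := hS.width
  have hheight := hS.height
  by_cases hfull : x₁ < x ∧ y₁ < y
  · exact hS.compOf_lower_full hcorner' hfull.1 hx' hfull.2 hy'
  have hupper {x' y' : ℤ} (hadj : HexAdj (x, y, false) (x', y', true)) (hx : x₁ ≤ x')
      (hx' : x' < x₂) (hy : y₁ ≤ y') (hy' : y' < y₂) :
      compOf S (x, y, false) = compOf S (x₁ + 1, y₁ + 1, false) :=
    (hadj.compOf_eq hZ (hS.upper_mem hx hx' hy hy')).trans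
      (hS.compOf_upper_full hcorner hx hx' hy hy')
  rcases hx'.lt_or_eq with hlt | rfl
  · rcases hy'.lt_or_eq with hlt' | rfl
    · exact hupper (hexAdj_a_edge x y).symm hx hlt hy hlt'
    · exact hupper (hexAdj_c_edge_sub_one x y) hx hlt (by lia) (by lia)
  · exact hupper (hexAdj_b_edge_sub_one x y) (by lia) (by lia) hy (by lia)

theorem compOf_upper (hcorner : IsLowerCorner S x₁ y₁) (hcorner' : IsUpperCorner S x₂ y₂)
    (hx : x₁ ≤ x) (hx' : x ≤ x₂) (hy : y₁ ≤ y) (hy' : y ≤ y₂) (hO : (x, y, true) ∈ S) :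
    compOf S (x, y, true) = compOf S (x₁ + 1, y₁ + 1, false) := by
  have hwidth := hS.width
  have hheight := hS.height
  by_cases hfull : x < x₂ ∧ y < y₂
  · exact hS.compOf_upper_full hcorner hx hfull.1 hy hfull.2
  have hlower {x' y' : ℤ} (hadj : HexAdj (x, y, true) (x', y', false)) (hx : x₁ < x')
      (hx' : x' ≤ x₂) (hy : y₁ < y') (hy' : y' ≤ y₂) :
      compOf S (x, y, true) = compOf S (x₁ + 1, y₁ + 1, false) :=
    (hadj.compOf_eq hO (hS.lower_mem hx hx' hy hy')).trans
      (hS.compOf_lower_full hcorner' hx hx' hy hy')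
  rcases hx.lt_or_eq with hlt | rfl
  · rcases hy.lt_or_eq with hlt' | rfl
    · exact hlower (hexAdj_a_edge x y) hlt hx' hlt' hy'
    · exact hlower (hexAdj_c_edge x y₁) hlt hx' (by lia) (by lia)
  · exact hlower (hexAdj_b_edge x₁ y) (by lia) (by lia) (by lia) hy'

end IsFilledRect

end Rectangle

section HorizontalFilling

variable {ω : Config} {F : Finset HexE} {v : HexV}

/-- The configuration in which exactly the horizontal edges are present, so that every vertex has
local configuration `{001}`. -/
def horizontal : Config := fun e => decide (e.2.2 = 0)

theorem horizontal_edgesAt (v : HexV) (i : Fin 3) : horizontal (edgesAt v i) = conf001 i := by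
  obtain ⟨x, y, t⟩ := v
  cases t <;> fin_cases i <;> rfl

theorem isConfig_iff_exists_true_exists_false :
    IsConfig ω ↔ ∀ v, (∃ i, localConf ω v i = true) ∧ ∃ i, localConf ω v i = false := by
  have hlocal : ∀ f : Fin 3 → Bool,
      (1 ≤ (Finset.univ.filter fun i => f i = true).card ∧
        (Finset.univ.filter fun i => f i = true).card ≤ 2) ↔
      (∃ i, f i = true) ∧ ∃ i, f i = false := by decide
  exact forall_congr' fun v => hlocal _

theorem localConf_piecewise_apply_of_mem {σ : Config} {i : Fin 3} (h : edgesAt v i ∈ F) :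
    localConf (F.piecewise σ ω) v i = localConf σ v i :=
  F.piecewise_eq_of_mem _ _ h

theorem localConf_piecewise_apply_of_notMem {σ : Config} {i : Fin 3} (h : edgesAt v i ∉ F) :
    localConf (F.piecewise σ ω) v i = localConf ω v i :=
  F.piecewise_eq_of_notMem _ _ h

theorem IsConfig.piecewise_horizontal (hω : IsConfig ω)
    (hF : ∀ v, (edgesAt v 0 ∈ F ∧ (edgesAt v 1 ∈ F ∨ edgesAt v 2 ∈ F)) ∨
      ((edgesAt v 0 ∈ F → ω (edgesAt v 0) = true) ∧ edgesAt v 1 ∉ F ∧ edgesAt v 2 ∉ F)) :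
    IsConfig (F.piecewise horizontal ω) := by
  rw [isConfig_iff_exists_true_exists_false] at hω ⊢
  intro v
  rcases hF v with ⟨h0, h⟩ | ⟨h0, h1, h2⟩
  · refine ⟨⟨0, (localConf_piecewise_apply_of_mem h0).trans (horizontal_edgesAt v 0)⟩, ?_⟩
    rcases h with h | h
    · exact ⟨1, (localConf_piecewise_apply_of_mem h).trans (horizontal_edgesAt v 1)⟩
    · exact ⟨2, (localConf_piecewise_apply_of_mem h).trans (horizontal_edgesAt v 2)⟩
  · have hsame : localConf (F.piecewise horizontal ω) v = localConf ω v := by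
      funext i
      by_cases hi : edgesAt v i ∈ F
      · obtain rfl : i = 0 := by
          fin_cases i
          exacts [rfl, absurd hi h1, absurd hi h2]
        rw [localConf_piecewise_apply_of_mem hi, localConf, horizontal_edgesAt, localConf, h0 hi]
        rfl
      · exact localConf_piecewise_apply_of_notMem hi
    exact hsame ▸ hω v

theorem confSet_subset_confSet_piecewise_horizontal :
    confSet ω conf001 ⊆ confSet (F.piecewise horizontal ω) conf001 := by
  intro v hv
  funext i
  by_cases hi : edgesAt v i ∈ F
  · exact (localConf_piecewise_apply_of_mem hi).trans (horizontal_edgesAt v i)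
  · exact (localConf_piecewise_apply_of_notMem hi).trans (congrFun hv i)

theorem mem_confSet_piecewise_horizontal (hv : ∀ i, edgesAt v i ∈ F) :
    v ∈ confSet (F.piecewise horizontal ω) conf001 :=
  funext fun i => (localConf_piecewise_apply_of_mem (hv i)).trans (horizontal_edgesAt v i)

theorem mem_confSet_of_mem_confSet_piecewise {σ : Config} {τ : Fin 3 → Bool}
    (hv : v ∈ confSet (F.piecewise σ ω) τ) (hF : ∀ i, edgesAt v i ∉ F) : v ∈ confSet ω τ :=
  funext fun i => (localConf_piecewise_apply_of_notMem (hF i)).symm.trans (congrFun hv i)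

/-- The edges with both endpoints in cells of the rectangle `[x₁, x₂] × [y₁, y₂]`. -/
noncomputable def rectEdges (x₁ x₂ y₁ y₂ : ℤ) : Finset HexE :=
  (Finset.Icc x₁ x₂ ×ˢ Finset.Icc y₁ y₂ ×ˢ (Finset.univ : Finset (Fin 3))).filter
    fun e => (e.2.2 = 1 → e.1 < x₂) ∧ (e.2.2 = 2 → e.2.1 < y₂)

variable {x₁ x₂ y₁ y₂ x y : ℤ}

theorem mem_rectEdges {e : HexE} : e ∈ rectEdges x₁ x₂ y₁ y₂ ↔
    ((x₁ ≤ e.1 ∧ e.1 ≤ x₂) ∧ y₁ ≤ e.2.1 ∧ e.2.1 ≤ y₂) ∧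
      (e.2.2 = 1 → e.1 < x₂) ∧ (e.2.2 = 2 → e.2.1 < y₂) := by
  simp only [rectEdges, Finset.mem_filter, Finset.mem_product, Finset.mem_Icc, Finset.mem_univ,
    and_true]

theorem a_edge_mem_rectEdges :
    ((x, y, 0) : HexE) ∈ rectEdges x₁ x₂ y₁ y₂ ↔ x₁ ≤ x ∧ x ≤ x₂ ∧ y₁ ≤ y ∧ y ≤ y₂ := by
  rw [mem_rectEdges]; lia

theorem b_edge_mem_rectEdges :
    ((x, y, 1) : HexE) ∈ rectEdges x₁ x₂ y₁ y₂ ↔ x₁ ≤ x ∧ x < x₂ ∧ y₁ ≤ y ∧ y ≤ y₂ := by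
  rw [mem_rectEdges]; lia

theorem c_edge_mem_rectEdges :
    ((x, y, 2) : HexE) ∈ rectEdges x₁ x₂ y₁ y₂ ↔ x₁ ≤ x ∧ x ≤ x₂ ∧ y₁ ≤ y ∧ y < y₂ := by
  rw [mem_rectEdges]; lia

theorem edgesAt_lower (x y : ℤ) :
    edgesAt (x, y, false) = ![(x, y, 0), (x - 1, y, 1), (x, y - 1, 2)] := by
  funext i; fin_cases i <;> rfl

theorem edgesAt_upper (x y : ℤ) : edgesAt (x, y, true) = ![(x, y, 0), (x, y, 1), (x, y, 2)] := by
  funext i; fin_cases i <;> rfl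

theorem edgesAt_notMem_rectEdges (h : ¬(x₁ ≤ v.1 ∧ v.1 ≤ x₂ ∧ y₁ ≤ v.2.1 ∧ v.2.1 ≤ y₂)) :
    ∀ i, edgesAt v i ∉ rectEdges x₁ x₂ y₁ y₂ := by
  obtain ⟨x, y, t⟩ := v
  cases t <;>
    simp only [edgesAt_lower, edgesAt_upper, Fin.forall_fin_succ, Fin.forall_fin_zero,
      Matrix.cons_val_zero, Matrix.cons_val_succ, a_edge_mem_rectEdges, b_edge_mem_rectEdges,
      c_edge_mem_rectEdges] at h ⊢ <;>
    lia

theorem IsConfig.piecewise_rectEdges (hω : IsConfig ω) (h₁ : ω (x₁, y₁, 0) = true)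
    (h₂ : ω (x₂, y₂, 0) = true) : IsConfig ((rectEdges x₁ x₂ y₁ y₂).piecewise horizontal ω) := by
  refine hω.piecewise_horizontal fun ⟨x, y, t⟩ => ?_
  cases t
  · simp only [edgesAt_lower, Matrix.cons_val, a_edge_mem_rectEdges, b_edge_mem_rectEdges,
      c_edge_mem_rectEdges]
    by_cases hcorner : x = x₁ ∧ y = y₁
    · obtain ⟨rfl, rfl⟩ := hcorner
      exact .inr ⟨fun _ => h₁, by lia, by lia⟩
    · by_cases hmem : x₁ ≤ x ∧ x ≤ x₂ ∧ y₁ ≤ y ∧ y ≤ y₂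
      · exact .inl ⟨hmem, by omega⟩
      · exact .inr ⟨fun h => absurd h hmem, by omega, by omega⟩
  · simp only [edgesAt_upper, Matrix.cons_val, a_edge_mem_rectEdges, b_edge_mem_rectEdges,
      c_edge_mem_rectEdges]
    by_cases hcorner : x = x₂ ∧ y = y₂
    · obtain ⟨rfl, rfl⟩ := hcorner
      exact .inr ⟨fun _ => h₂, by lia, by lia⟩
    · by_cases hmem : x₁ ≤ x ∧ x ≤ x₂ ∧ y₁ ≤ y ∧ y ≤ y₂
      · exact .inl ⟨hmem, by omega⟩
      · exact .inr ⟨fun h => absurd h hmem, by omega, by omega⟩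

theorem isFilledRect_confSet_piecewise_horizontal (hx : x₁ + 2 ≤ x₂) (hy : y₁ + 2 ≤ y₂) :
    IsFilledRect (confSet ((rectEdges x₁ x₂ y₁ y₂).piecewise horizontal ω) conf001)
      x₁ x₂ y₁ y₂ where
  width := hx
  height := hy
  lower_mem _ _ _ _ := mem_confSet_piecewise_horizontal <| by
    simp only [edgesAt_lower, Fin.forall_fin_succ, Fin.forall_fin_zero, Matrix.cons_val_zero,
      Matrix.cons_val_succ, a_edge_mem_rectEdges, b_edge_mem_rectEdges, c_edge_mem_rectEdges,
      and_true]
    omega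
  upper_mem _ _ _ _ := mem_confSet_piecewise_horizontal <| by
    simp only [edgesAt_upper, Fin.forall_fin_succ, Fin.forall_fin_zero, Matrix.cons_val_zero,
      Matrix.cons_val_succ, a_edge_mem_rectEdges, b_edge_mem_rectEdges, c_edge_mem_rectEdges,
      and_true]
    omega

theorem confSet_piecewise_horizontal_diff_subset :
    confSet ((rectEdges x₁ x₂ y₁ y₂).piecewise horizontal ω) conf001 \
      {v | x₁ ≤ v.1 ∧ v.1 ≤ x₂ ∧ y₁ ≤ v.2.1 ∧ v.2.1 ≤ y₂} ⊆ confSet ω conf001 :=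
  fun _ hv => mem_confSet_of_mem_confSet_piecewise hv.1 (edgesAt_notMem_rectEdges hv.2)

theorem numInfClusters_piecewise_horizontal_le_one (hx : x₁ + 2 ≤ x₂) (hy : y₁ + 2 ≤ y₂)
    (hlower : IsLowerCorner (confSet ω conf001) x₁ y₁)
    (hupper : IsUpperCorner (confSet ω conf001) x₂ y₂)
    (hmeet : ∀ C, IsCluster ω conf001 C → C.Infinite →
      ∃ v ∈ C, x₁ ≤ v.1 ∧ v.1 ≤ x₂ ∧ y₁ ≤ v.2.1 ∧ v.2.1 ≤ y₂) :
    numInfClusters ((rectEdges x₁ x₂ y₁ y₂).piecewise horizontal ω) conf001 ≤ 1 := by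
  set T := confSet ((rectEdges x₁ x₂ y₁ y₂).piecewise horizontal ω) conf001
  have hST : confSet ω conf001 ⊆ T := confSet_subset_confSet_piecewise_horizontal
  have hrect : IsFilledRect T x₁ x₂ y₁ y₂ := isFilledRect_confSet_piecewise_horizontal hx hy
  have hhub : ∀ v ∈ T ∩ {v | x₁ ≤ v.1 ∧ v.1 ≤ x₂ ∧ y₁ ≤ v.2.1 ∧ v.2.1 ≤ y₂},
      compOf T v = compOf T (x₁ + 1, y₁ + 1, false) := by
    rintro ⟨x, y, t⟩ ⟨hv, hx, hx', hy, hy'⟩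
    cases t
    · exact hrect.compOf_lower (hlower.mono hST) (hupper.mono hST) hx hx' hy hy' hv
    · exact hrect.compOf_upper (hlower.mono hST) (hupper.mono hST) hx hx' hy hy' hv
  have huniq : ∀ D ∈ {D | IsCompOf T D ∧ D.Infinite}, D = compOf T (x₁ + 1, y₁ + 1, false) :=
    fun D hD => hD.1.eq_of_infinite_of_local_enlargement hST
      confSet_piecewise_horizontal_diff_subset hhub hmeet hD.2
  exact Set.encard_le_one_iff.2 fun C D hC hD => (huniq C hC).trans (huniq D hD).symm

theorem exists_isConfig_piecewise_numInfClusters_le_one (hω : IsConfig ω)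
    (hnum : numInfClusters ω conf001 ≠ ⊤)
    (hcorners : ∀ N : ℤ, (∃ x ≤ N, ∃ y ≤ N, IsLowerCorner (confSet ω conf001) x y) ∧
      ∃ x ≥ N, ∃ y ≥ N, IsUpperCorner (confSet ω conf001) x y) :
    ∃ F : Finset HexE, IsConfig (F.piecewise horizontal ω) ∧
      numInfClusters (F.piecewise horizontal ω) conf001 ≤ 1 := by
  have hfin : {C | IsCluster ω conf001 C ∧ C.Infinite}.Finite := Set.encard_ne_top_iff.1 hnum
  have hnonempty (C : Set HexV) (hC : IsCluster ω conf001 C) : C.Nonempty := by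
    obtain ⟨v, -, rfl⟩ := hC
    exact ⟨v, mem_compOf_self _ v⟩
  choose! v hv using hnonempty
  obtain ⟨M, hM⟩ := (hfin.image fun C => max |(v C).1| |(v C).2.1|).bddAbove
  have hbound (C : Set HexV) (hC : IsCluster ω conf001 C) (hinf : C.Infinite) :
      |(v C).1| ≤ M ∧ |(v C).2.1| ≤ M := max_le_iff.1 (hM ⟨C, ⟨hC, hinf⟩, rfl⟩)
  obtain ⟨x₁, hx₁, y₁, hy₁, hlower⟩ := (hcorners (min (-M) (-1))).1
  obtain ⟨x₂, hx₂, y₂, hy₂, hupper⟩ := (hcorners (max M 1)).2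
  refine ⟨rectEdges x₁ x₂ y₁ y₂, hω.piecewise_rectEdges (congrFun hlower.1 0)
    (congrFun hupper.1 0), numInfClusters_piecewise_horizontal_le_one (by lia) (by lia) hlower
    hupper fun C hC hinf => ⟨v C, hv C hC, ?_⟩⟩
  have hvC := hbound C hC hinf
  simp only [abs_le] at hvC
  lia

end HorizontalFilling

section Cylinders

variable {μ : Measure Config} {F : Finset HexE} {ρ σ τ : Config}

theorem measurableSet_cyl (S : Set HexE) (σ : Config) : MeasurableSet (cyl S σ) := by
  have hcyl : cyl S σ = S.pi fun e => {σ e} := rfl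
  exact hcyl ▸ MeasurableSet.pi S.to_countable fun _ _ => measurableSet_singleton _

theorem measurable_piecewise (F : Finset HexE) (τ : Config) :
    Measurable fun ω : Config => F.piecewise τ ω := by
  refine measurable_pi_lambda _ fun e => ?_
  by_cases he : e ∈ F
  · simpa only [F.piecewise_eq_of_mem _ _ he] using measurable_const
  · simpa only [F.piecewise_eq_of_notMem _ _ he] using measurable_pi_apply e

theorem measure_ext_of_cyl {ν : Measure Config} [IsFiniteMeasure μ] [IsFiniteMeasure ν]
    (h : ∀ I : Finset HexE, ∃ J : Set HexE, J.Finite ∧ ↑I ⊆ J ∧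
      ∀ η, μ (cyl J η) = ν (cyl J η)) : μ = ν := by
  refine IsProjectiveLimit.unique (P := fun I : Finset HexE => ν.map I.restrict) (fun I => ?_)
    fun _ => rfl
  obtain ⟨J, hJ, hIJ, hcyl⟩ := h I
  lift J to Finset HexE using hJ
  have hmarginal : μ.map J.restrict = ν.map J.restrict := by
    refine Measure.ext_of_singleton fun f => ?_
    obtain ⟨η, rfl⟩ : ∃ η : Config, J.restrict η = f :=
      ⟨fun e => if he : e ∈ J then f ⟨e, he⟩ else false, by ext ⟨e, he⟩; simp [he]⟩
    have hpre : J.restrict (π := fun _ => Bool) ⁻¹' {J.restrict η} = cyl J η := by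
      ext ω
      exact funext_iff.trans Subtype.forall
    rw [Measure.map_apply (Finset.measurable_restrict J) (measurableSet_singleton _),
      Measure.map_apply (Finset.measurable_restrict J) (measurableSet_singleton _), hpre, hcyl]
  have hIJ' : I ⊆ J := Finset.coe_subset.1 hIJ
  simp only [← Finset.restrict₂_comp_restrict hIJ',
    ← Measure.map_map (Finset.measurable_restrict₂ hIJ') (Finset.measurable_restrict J), hmarginal]

theorem cyl_eq_of_mem {S : Set HexE} (h : ρ ∈ cyl S σ) : cyl S σ = cyl S ρ :=
  Set.ext fun _ => forall₂_congr fun e he => by rw [h e he]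

theorem piecewise_mem_cyl {S : Set HexE} {ω : Config} (hoff : ∀ e ∉ F, σ e = τ e)
    (hω : ω ∈ cyl S σ) : F.piecewise τ ω ∈ cyl S τ := by
  intro e he
  by_cases heF : e ∈ F
  · exact F.piecewise_eq_of_mem _ _ heF
  · rw [F.piecewise_eq_of_notMem _ _ heF, hω e he, hoff e heF]

theorem preimage_piecewise_cyl_inter_cyl {S T : Set HexE} (hFS : ↑F ⊆ S) (hST : S ⊆ T)
    (hoff : ∀ e ∉ F, σ e = τ e) (hρ : ρ ∈ cyl S τ) :
    (fun ω => F.piecewise τ ω) ⁻¹' cyl T ρ ∩ cyl S σ = cyl T (F.piecewise σ ρ) := by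
  ext ω
  simp only [cyl, Finset.piecewise, Set.mem_inter_iff, Set.mem_preimage, Set.mem_ofPred_eq,
    Set.subset_def, Finset.mem_coe] at *
  grind

end Cylinders

section FiniteEnergy

variable {a b c : ℝ} {μ : Measure Config} {F H : Finset HexE} {ρ σ τ : Config} {v : HexV}

theorem eq_end1_or_eq_end2_iff (v : HexV) (e : HexE) :
    v = end1 e ∨ v = end2 e ↔ ∃ i, edgesAt v i = e := by
  obtain ⟨x, y, t⟩ := v
  obtain ⟨x', y', k⟩ := e
  cases t <;> fin_cases k <;> simp [end1, end2, edgesAt, Fin.exists_fin_succ] <;> lia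

theorem mem_verts : v ∈ verts F ↔ ∃ i, edgesAt v i ∈ F := by
  simp only [verts, endsFinset, Finset.mem_biUnion, Finset.mem_insert, Finset.mem_singleton,
    eq_end1_or_eq_end2_iff]
  exact ⟨fun ⟨_, he, i, hi⟩ => ⟨i, hi ▸ he⟩, fun ⟨i, hi⟩ => ⟨_, hi, i, rfl⟩⟩

theorem edgeNbhd_eq_biUnion (F : Finset HexE) :
    edgeNbhd F = ⋃ v ∈ verts F, Set.range (edgesAt v) := by
  ext e'
  simp only [edgeNbhd, Set.mem_ofPred_eq, verts, endsFinset, Finset.mem_biUnion, Finset.mem_insert,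
    Finset.mem_singleton, Set.mem_iUnion, Set.mem_range, exists_prop, ← eq_end1_or_eq_end2_iff]
  constructor
  · rintro ⟨e, he, h | h | h | h⟩
    exacts [⟨_, ⟨e, he, .inl rfl⟩, .inl h⟩, ⟨_, ⟨e, he, .inl rfl⟩, .inr h⟩,
      ⟨_, ⟨e, he, .inr rfl⟩, .inl h⟩, ⟨_, ⟨e, he, .inr rfl⟩, .inr h⟩]
  · rintro ⟨_, ⟨e, he, rfl | rfl⟩, h | h⟩
    exacts [⟨e, he, .inl h⟩, ⟨e, he, .inr (.inl h)⟩, ⟨e, he, .inr (.inr (.inl h))⟩,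
      ⟨e, he, .inr (.inr (.inr h))⟩]

theorem edgesAt_mem_edgeNbhd (hv : v ∈ verts F) (i : Fin 3) : edgesAt v i ∈ edgeNbhd F := by
  rw [edgeNbhd_eq_biUnion]
  exact Set.mem_biUnion hv ⟨i, rfl⟩

theorem finite_edgeNbhd (F : Finset HexE) : (edgeNbhd F).Finite := by
  rw [edgeNbhd_eq_biUnion]
  exact (verts F).finite_toSet.biUnion fun v _ => Set.finite_range _

theorem subset_edgeNbhd (F : Finset HexE) : ↑F ⊆ edgeNbhd F :=
  fun e he => ⟨e, he, .inl rfl⟩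

theorem edgeNbhd_mono (h : F ⊆ H) : edgeNbhd F ⊆ edgeNbhd H :=
  fun _ ⟨e, he, hadj⟩ => ⟨e, h he, hadj⟩

theorem localConf_eq_of_mem_verts (h : ∀ e ∈ edgeNbhd F, σ e = τ e) (hv : v ∈ verts F) :
    localConf σ v = localConf τ v :=
  funext fun i => h _ (edgesAt_mem_edgeNbhd hv i)

theorem localConf_eq_of_notMem_verts (h : ∀ e ∉ F, σ e = τ e) (hv : v ∉ verts F) :
    localConf σ v = localConf τ v :=
  funext fun i => h _ fun hi => hv (mem_verts.2 ⟨i, hi⟩)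

theorem IsConfig.piecewise (hσ : IsConfig σ) (hρ : IsConfig ρ)
    (h : ∀ e ∈ edgeNbhd F, e ∉ F → σ e = ρ e) : IsConfig (F.piecewise σ ρ) := by
  intro v
  by_cases hv : v ∈ verts F
  · have hlocal : localConf (F.piecewise σ ρ) v = localConf σ v := by
      refine localConf_eq_of_mem_verts (fun e he => ?_) hv
      by_cases heF : e ∈ F
      · exact F.piecewise_eq_of_mem _ _ heF
      · rw [F.piecewise_eq_of_notMem _ _ heF, h e he heF]
    exact hlocal ▸ hσ v
  · have hlocal : localConf (F.piecewise σ ρ) v = localConf ρ v :=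
      localConf_eq_of_notMem_verts (fun e he => F.piecewise_eq_of_notMem _ _ he) hv
    exact hlocal ▸ hρ v

theorem weight_localConf_pos (ha : 0 < a) (hb : 0 < b) (hc : 0 < c) (hσ : IsConfig σ) (v : HexV) :
    0 < weight a b c (localConf σ v) := by
  obtain ⟨⟨i, hi⟩, j, hj⟩ := isConfig_iff_exists_true_exists_false.1 hσ v
  unfold weight
  split
  iterate 6 assumption
  · fin_cases i <;> simp_all
  · fin_cases j <;> simp_all

/-- The unnormalized Gibbs weight of `σ` at the vertices incident to `F`, valued in `ℝ≥0∞` to be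
compared with measures. -/
noncomputable def gibbsWeight (a b c : ℝ) (F : Finset HexE) (σ : Config) : ENNReal :=
  ENNReal.ofReal (∏ v ∈ verts F, weight a b c (localConf σ v))

theorem gibbsWeight_congr (h : ∀ e ∈ edgeNbhd F, σ e = τ e) :
    gibbsWeight a b c F σ = gibbsWeight a b c F τ := by
  unfold gibbsWeight
  congr 1
  exact Finset.prod_congr rfl fun v hv => by rw [localConf_eq_of_mem_verts h hv]

theorem gibbsWeight_ne_zero (ha : 0 < a) (hb : 0 < b) (hc : 0 < c) (hσ : IsConfig σ) :
    gibbsWeight a b c F σ ≠ 0 :=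
  (ENNReal.ofReal_pos.2 (Finset.prod_pos fun v _ => weight_localConf_pos ha hb hc hσ v)).ne'

theorem IsGibbs.cyl_mul_gibbsWeight (ha : 0 < a) (hb : 0 < b) (hc : 0 < c)
    (hμ : IsGibbs a b c μ) (hFH : F ⊆ H) (hσ : IsConfig σ) (hτ : IsConfig τ)
    (hoff : ∀ e ∉ F, σ e = τ e) :
    μ (cyl (edgeNbhd H) σ) * gibbsWeight a b c F τ =
      μ (cyl (edgeNbhd H) τ) * gibbsWeight a b c F σ := by
  set R : ENNReal := ENNReal.ofReal (∏ v ∈ verts H \ verts F, weight a b c (localConf σ v))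
  have hR : R ≠ 0 :=
    (ENNReal.ofReal_pos.2 (Finset.prod_pos fun v _ => weight_localConf_pos ha hb hc hσ v)).ne'
  have hverts : verts F ⊆ verts H := Finset.biUnion_subset_biUnion_of_subset_left _ hFH
  have hsplit (ρ : Config) (hρ : IsConfig ρ) (hoff : ∀ e ∉ F, σ e = ρ e) :
      ENNReal.ofReal (∏ v ∈ verts H, weight a b c (localConf ρ v)) =
        R * gibbsWeight a b c F ρ := by
    rw [← Finset.prod_sdiff hverts, ENNReal.ofReal_mul
      (Finset.prod_nonneg fun v _ => (weight_localConf_pos ha hb hc hρ v).le), gibbsWeight]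
    congr 2
    refine Finset.prod_congr rfl fun v hv => ?_
    rw [localConf_eq_of_notMem_verts hoff (Finset.mem_sdiff.1 hv).2]
  have hgibbs := hμ.2.2 H σ τ hσ hτ fun e he => hoff e fun heF => he (hFH heF)
  rw [Set.union_eq_self_of_subset_left (subset_edgeNbhd H), hsplit τ hτ hoff,
    hsplit σ hσ fun _ _ => rfl, mul_left_comm, mul_left_comm _ R] at hgibbs
  exact (ENNReal.mul_right_inj hR ENNReal.ofReal_ne_top).1 hgibbs

theorem IsGibbs.ae_isConfig (hμ : IsGibbs a b c μ) : ∀ᵐ ω ∂μ, IsConfig ω :=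
  have := hμ.1
  (mem_ae_iff_prob_eq_one measurableSet_isConfig).2 hμ.2.1

theorem IsGibbs.gibbsWeight_mul_preimage_piecewise_cyl (ha : 0 < a) (hb : 0 < b) (hc : 0 < c)
    (hμ : IsGibbs a b c μ) (hFH : F ⊆ H) (hσ : IsConfig σ) (hτ : IsConfig τ)
    (hoff : ∀ e ∉ F, σ e = τ e) (η : Config) :
    gibbsWeight a b c F τ *
        μ ((fun ω => F.piecewise τ ω) ⁻¹' cyl (edgeNbhd H) η ∩ cyl (edgeNbhd F) σ) =
      gibbsWeight a b c F σ * μ (cyl (edgeNbhd H) η ∩ cyl (edgeNbhd F) τ) := by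
  have hNJ : edgeNbhd F ⊆ edgeNbhd H := edgeNbhd_mono hFH
  set N := edgeNbhd F
  set J := edgeNbhd H
  by_cases hex : ∃ ρ, IsConfig ρ ∧ ρ ∈ cyl J η ∧ ρ ∈ cyl N τ
  · obtain ⟨ρ, hρ, hρJ, hρN⟩ := hex
    have hpw : IsConfig (F.piecewise σ ρ) :=
      hσ.piecewise hρ fun e he heF => (hoff e heF).trans (hρN e he).symm
    have hpwN : F.piecewise σ ρ ∈ cyl N σ :=
      piecewise_mem_cyl (fun e he => (hoff e he).symm) hρN
    have hsub : cyl J ρ ⊆ cyl N τ := fun ω hω e he => (hω e (hNJ he)).trans (hρN e he)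
    rw [cyl_eq_of_mem hρJ, preimage_piecewise_cyl_inter_cyl (subset_edgeNbhd F) hNJ hoff hρN,
      Set.inter_eq_left.2 hsub, ← gibbsWeight_congr hρN, ← gibbsWeight_congr hpwN,
      mul_comm, mul_comm _ (μ (cyl J ρ))]
    exact hμ.cyl_mul_gibbsWeight ha hb hc hFH hpw hρ fun e he =>
      F.piecewise_eq_of_notMem _ _ he
  · have hnull : μ (cyl J η ∩ cyl N τ) = 0 := measure_eq_zero_iff_ae_notMem.2 <|
      hμ.ae_isConfig.mono fun ω hω hmem => hex ⟨ω, hω, hmem⟩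
    have hnull' : μ ((fun ω => F.piecewise τ ω) ⁻¹' cyl J η ∩ cyl N σ) = 0 := by
      refine measure_eq_zero_iff_ae_notMem.2 (hμ.ae_isConfig.mono fun ω hω hmem => hex ?_)
      exact ⟨F.piecewise τ ω, hτ.piecewise hω fun e he heF => by rw [hmem.2 e he, hoff e heF],
        hmem.1, piecewise_mem_cyl hoff hmem.2⟩
    rw [hnull, hnull', mul_zero, mul_zero]

theorem IsGibbs.gibbsWeight_smul_map_piecewise_restrict_cyl (ha : 0 < a) (hb : 0 < b) (hc : 0 < c)
    (hμ : IsGibbs a b c μ) (hσ : IsConfig σ) (hτ : IsConfig τ) (hoff : ∀ e ∉ F, σ e = τ e) :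
    gibbsWeight a b c F τ •
        (μ.restrict (cyl (edgeNbhd F) σ)).map (fun ω => F.piecewise τ ω) =
      gibbsWeight a b c F σ • μ.restrict (cyl (edgeNbhd F) τ) := by
  have := hμ.1
  have (ρ : Config) (ν : Measure Config) [IsFiniteMeasure ν] :
      IsFiniteMeasure (gibbsWeight a b c F ρ • ν) := ν.smul_finite ENNReal.ofReal_ne_top
  refine measure_ext_of_cyl fun I => ⟨edgeNbhd (F ∪ I), finite_edgeNbhd _, ?_, fun η => ?_⟩
  · exact (Finset.coe_subset.2 Finset.subset_union_right).trans (subset_edgeNbhd _)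
  · simpa only [Measure.smul_apply, smul_eq_mul,
      Measure.map_apply (measurable_piecewise F τ) (measurableSet_cyl _ η),
      Measure.restrict_apply (measurable_piecewise F τ (measurableSet_cyl _ η)),
      Measure.restrict_apply (measurableSet_cyl _ η)] using
      hμ.gibbsWeight_mul_preimage_piecewise_cyl ha hb hc Finset.subset_union_left hσ hτ hoff η

theorem IsGibbs.absolutelyContinuous_map_piecewise (ha : 0 < a) (hb : 0 < b) (hc : 0 < c)
    (hμ : IsGibbs a b c μ) (hσ : IsConfig σ) (hτ : IsConfig τ) (hoff : ∀ e ∉ F, σ e = τ e) :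
    (μ.restrict (cyl (edgeNbhd F) σ)).map (fun ω => F.piecewise τ ω) ≪ μ := by
  intro s hs
  have hnull := congrArg (· s)
    (hμ.gibbsWeight_smul_map_piecewise_restrict_cyl ha hb hc hσ hτ hoff)
  simp only [Measure.smul_apply, smul_eq_mul, Measure.restrict_le_self.absolutelyContinuous hs,
    mul_zero] at hnull
  exact (mul_eq_zero.1 hnull).resolve_left (gibbsWeight_ne_zero ha hb hc hτ)

theorem IsGibbs.ae_piecewise (ha : 0 < a) (hb : 0 < b) (hc : 0 < c) (hμ : IsGibbs a b c μ)
    (F : Finset HexE) (τ : Config) {p : Config → Prop} (hp : ∀ᵐ ω ∂μ, p ω) :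
    ∀ᵐ ω ∂μ, IsConfig (F.piecewise τ ω) → p (F.piecewise τ ω) := by
  have := (finite_edgeNbhd F).to_subtype
  have hpattern (f : edgeNbhd F → Bool) : ∀ᵐ ω ∂μ, (edgeNbhd F).domRestrict ω = f → IsConfig ω →
      IsConfig (F.piecewise τ ω) → p (F.piecewise τ ω) := by
    by_cases hex : ∃ σ, (edgeNbhd F).domRestrict σ = f ∧ IsConfig σ ∧ IsConfig (F.piecewise τ σ)
    · obtain ⟨σ, rfl, hσ, hτσ⟩ := hex
      have hmap := (hμ.absolutelyContinuous_map_piecewise ha hb hc hσ hτσ fun e he =>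
        (F.piecewise_eq_of_notMem _ _ he).symm).ae_le hp
      have hrestrict := ae_of_ae_map (measurable_piecewise F _).aemeasurable hmap
      filter_upwards [(ae_restrict_iff' (measurableSet_cyl _ σ)).1 hrestrict] with ω hω hωσ _ _
      rw [← F.piecewise_idem_left τ σ ω]
      exact hω fun e he => congrFun hωσ ⟨e, he⟩
    · exact .of_forall fun ω hωf hω hτω => absurd ⟨ω, hωf, hω, hτω⟩ hex
  filter_upwards [ae_all_iff.2 hpattern, hμ.ae_isConfig] with ω hω hvalid
  exact hω _ rfl hvalid

theorem IsGibbs.le_one_of_ae_numInfClusters_eq (ha : 0 < a) (hb : 0 < b) (hc : 0 < c)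
    (hμ : IsGibbs a b c μ) (hTI : TransInvariant μ) {κ : ℕ∞} (hκ : κ ≠ ⊤)
    (hnum : ∀ᵐ ω ∂μ, numInfClusters ω conf001 = κ) : κ ≤ 1 := by
  have := hμ.1
  rcases eq_or_ne κ 0 with rfl | hκ0
  · exact zero_le_one
  have hpw : ∀ᵐ ω ∂μ, ∀ F : Finset HexE, IsConfig (F.piecewise horizontal ω) →
      numInfClusters (F.piecewise horizontal ω) conf001 = κ :=
    ae_all_iff.2 fun F => hμ.ae_piecewise ha hb hc F horizontal hnum
  obtain ⟨ω, hω, hωκ, hpwω, hcorners⟩ := (hμ.ae_isConfig.and (hnum.and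
    (hpw.and (hTI.ae_forall_exists_corners conf001)))).exists
  obtain ⟨F, hF, hle⟩ := exists_isConfig_piecewise_numInfClusters_le_one hω (hωκ ▸ hκ)
    (hcorners (hωκ ▸ hκ0))
  exact hpwω F hF ▸ hle

end FiniteEnergy

/-- For an ergodic translation-invariant Gibbs measure, the number of infinite
`{001}`-clusters is almost surely constant, equal to `0`, `1`, or `∞`. -/
theorem number_of_infinite_001_clusters_zero_one_infinity
    (a b c : ℝ) (ha : 0 < a) (hb : 0 < b) (hc : 0 < c)
    (μ : Measure Config) (hGibbs : IsGibbs a b c μ) (hTI : TransInvariant μ)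
    (hErg : IsErgodicTI μ) :
    ∃ κ : ℕ∞, (κ = 0 ∨ κ = 1 ∨ κ = ⊤) ∧
      μ {ω : Config | numInfClusters ω conf001 = κ} = 1 := by
  have := hGibbs.1
  obtain ⟨κ, hκ⟩ := hErg.exists_ae_eq_const (measurable_numInfClusters conf001)
    fun g ω => numInfClusters_shiftConfig g ω conf001
  have hprob : μ {ω | numInfClusters ω conf001 = κ} = 1 :=
    (mem_ae_iff_prob_eq_one
      (measurable_numInfClusters conf001 (measurableSet_singleton κ))).1 hκ
  refine ⟨κ, ?_, hprob⟩
  rcases eq_or_ne κ ⊤ with htop | hfinite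
  · exact .inr (.inr htop)
  · have hle : κ ≤ 1 := hGibbs.le_one_of_ae_numInfClusters_eq ha hb hc hTI hfinite hκ
    exact (Order.le_one_iff.1 hle).imp_right .inl
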